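/- arXiv:1201.2739 — 6 statements merged into one kernel-verified Lean document; each statement's English description precedes it below -/
import Mathlib

section
/- Fix an integer k ≥ 2. There exists a real constant c > 0 (depending only on k) such that for all positive integers n and ℓ with k ∣ n, k ∣ ℓ and k ≤ ℓ ≤ n, and for every subset Y of Fin n with card Y = ℓ, the number of k-divisions of Fin n that are good with respect to Y is at least c · (ℓ : ℝ)^((1−k)/2) times the total number of k-divisions of Fin n. Equivalently, the probability that a uniformly random k-division is good with respect to Y is at least c · ℓ^((1−k)/2). -/
/-- A `k`-division of `Fin n`: a partition of `Fin n` into `k` blocks,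
each of cardinality `n / k`. -/
def IsKDivision (n k : ℕ) (D : Finset (Finset (Fin n))) : Prop :=
  D.card = k ∧ (∀ I ∈ D, I.card = n / k) ∧
    (∀ I ∈ D, ∀ J ∈ D, I ≠ J → Disjoint I J) ∧ D.biUnion id = Finset.univ

instance (n k : ℕ) (D : Finset (Finset (Fin n))) : Decidable (IsKDivision n k D) := by
  unfold IsKDivision; infer_instance

/-- A division is good with respect to `Y` (of cardinality `ℓ`) if every block
meets `Y` in exactly `ℓ / k` elements. -/
def IsGoodDivision (n ℓ k : ℕ) (Y : Finset (Fin n)) (D : Finset (Finset (Fin n))) : Prop :=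
  ∀ I ∈ D, (I ∩ Y).card = ℓ / k

instance (n ℓ k : ℕ) (Y : Finset (Fin n)) (D : Finset (Finset (Fin n))) :
    Decidable (IsGoodDivision n ℓ k Y D) := by
  unfold IsGoodDivision; infer_instance

/-!
Count the pairs `(D, Y)` with `D` a division and `Y` an `ℓ`-set for which `D` is good. Each
division is good for exactly `(n / k).choose (ℓ / k) ^ k` sets, one choice of `ℓ / k` points per
block, and by symmetry each `Y` has the same number of good divisions. Hence, with `n = k * m` and
`ℓ = k * a`, a random division is good with probability `m.choose a ^ k / (k * m).choose (k * a)`.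

In terms of `M x = (k * x)! / x! ^ k` this probability equals `M a * M (m - a) / M m`. By Stirling's
formula `M x` has order `k ^ (k * x) / √x ^ (k - 1)`. The powers of `k` cancel, and `m - a ≤ m`
leaves a lower bound of order `1 / √a ^ (k - 1)`.
-/

section Stirling

open Nat Real

/-- The main term `√n (n / e)ⁿ` of Stirling's formula, without the constant `√(2π)`. -/
noncomputable def stirlingTerm (n : ℕ) : ℝ :=
  √n * (n / exp 1) ^ n

theorem stirlingTerm_nonneg (n : ℕ) : 0 ≤ stirlingTerm n := by
  unfold stirlingTerm
  positivity

theorem stirlingTerm_le_factorial (n : ℕ) : stirlingTerm n ≤ n ! := by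
  refine le_trans ?_ (Stirling.le_factorial_stirling n)
  have one_le_two_pi : 1 ≤ 2 * π := by linarith [pi_gt_three]
  unfold stirlingTerm
  gcongr
  exact le_mul_of_one_le_left n.cast_nonneg one_le_two_pi

theorem factorial_le_exp_one_mul_stirlingTerm {n : ℕ} (hn : n ≠ 0) :
    n ! ≤ exp 1 * stirlingTerm n := by
  obtain ⟨j, rfl⟩ := exists_eq_succ_of_ne_zero hn
  have seq_le_seq_one : Stirling.stirlingSeq (j + 1) ≤ exp 1 / √2 := by
    simpa using Stirling.stirlingSeq'_antitone j.zero_le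
  rw [Stirling.stirlingSeq, div_le_iff₀ (by positivity), sqrt_mul zero_le_two] at seq_le_seq_one
  refine seq_le_seq_one.trans_eq ?_
  unfold stirlingTerm
  field_simp

theorem stirlingTerm_mul {k : ℕ} (hk : k ≠ 0) (x : ℕ) :
    stirlingTerm (k * x) * √x ^ (k - 1) = √k * k ^ (k * x) * stirlingTerm x ^ k := by
  have sqrt_pow : √(x : ℝ) ^ k = √x * √x ^ (k - 1) := (mul_pow_sub_one hk _).symm
  unfold stirlingTerm
  rw [cast_mul, sqrt_mul k.cast_nonneg, mul_div_assoc, mul_pow, mul_pow, sqrt_pow, ← pow_mul,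
    mul_comm x k]
  ring

end Stirling

section BalancedMultinomial

open Nat Real

/-- The balanced multinomial coefficient `(kx)! / (x!)ᵏ`, the number of ordered partitions of a set
of size `kx` into `k` blocks of size `x`, as a real number. -/
noncomputable def balancedMultinomial (k x : ℕ) : ℝ :=
  (k * x)! / (x ! : ℝ) ^ k

theorem balancedMultinomial_pos (k x : ℕ) : 0 < balancedMultinomial k x := by
  unfold balancedMultinomial
  positivity

theorem choose_mul_balancedMultinomial (k a b : ℕ) :
    ((k * (a + b)).choose (k * a) : ℝ) * (balancedMultinomial k a * balancedMultinomial k b) =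
      (a + b).choose a ^ k * balancedMultinomial k (a + b) := by
  have factorial_add (i j : ℕ) : ((i + j)! : ℝ) = (i + j).choose i * i ! * j ! := by
    rw [choose_symm_add]
    exact_mod_cast (add_choose_mul_factorial_mul_factorial i j).symm
  unfold balancedMultinomial
  rw [mul_add, factorial_add (k * a) (k * b), factorial_add a b, mul_pow, mul_pow]
  have choose_ne_zero : ((a + b).choose a : ℝ) ≠ 0 :=
    cast_ne_zero.2 (choose_pos (a.le_add_right b)).ne'
  field_simp

variable {k : ℕ}

theorem balancedMultinomial_mul_sqrt_pow_le (hk : k ≠ 0) {x : ℕ} (hx : x ≠ 0) :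
    balancedMultinomial k x * √x ^ (k - 1) ≤ exp 1 * √k * k ^ (k * x) := by
  rw [balancedMultinomial, div_mul_eq_mul_div, div_le_iff₀ (by positivity)]
  calc ((k * x)! : ℝ) * √x ^ (k - 1)
    _ ≤ exp 1 * stirlingTerm (k * x) * √x ^ (k - 1) := by
      gcongr
      exact factorial_le_exp_one_mul_stirlingTerm (mul_ne_zero hk hx)
    _ = exp 1 * √k * k ^ (k * x) * stirlingTerm x ^ k := by
      rw [mul_assoc, stirlingTerm_mul hk]
      ring
    _ ≤ exp 1 * √k * k ^ (k * x) * (x ! : ℝ) ^ k := by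
      gcongr
      exacts [stirlingTerm_nonneg x, stirlingTerm_le_factorial x]

theorem pow_mul_le_balancedMultinomial_mul_sqrt_pow (hk : k ≠ 0) {x : ℕ} (hx : x ≠ 0) :
    (k : ℝ) ^ (k * x) ≤ exp 1 ^ k * balancedMultinomial k x * √x ^ (k - 1) := by
  have one_le_sqrt : 1 ≤ √(k : ℝ) :=
    Real.one_le_sqrt.2 (one_le_cast.2 (one_le_iff_ne_zero.2 hk))
  rw [balancedMultinomial, mul_div_assoc', div_mul_eq_mul_div, le_div_iff₀ (by positivity)]
  calc (k : ℝ) ^ (k * x) * (x ! : ℝ) ^ k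
    _ ≤ k ^ (k * x) * (exp 1 * stirlingTerm x) ^ k := by
      gcongr
      exact factorial_le_exp_one_mul_stirlingTerm hx
    _ = exp 1 ^ k * (1 * k ^ (k * x) * stirlingTerm x ^ k) := by ring
    _ ≤ exp 1 ^ k * (√k * k ^ (k * x) * stirlingTerm x ^ k) := by
      have := stirlingTerm_nonneg x
      gcongr
    _ = exp 1 ^ k * (stirlingTerm (k * x) * √x ^ (k - 1)) := by rw [stirlingTerm_mul hk]
    _ ≤ exp 1 ^ k * ((k * x)! * √x ^ (k - 1)) := by
      gcongr
      exact stirlingTerm_le_factorial (k * x)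
    _ = exp 1 ^ k * (k * x)! * √x ^ (k - 1) := (mul_assoc _ _ _).symm

-- Replacing `√x` by a larger `√m` makes the lower bound available at `x = 0` as well.
theorem pow_mul_le_balancedMultinomial_mul_sqrt_pow_of_le (hk : k ≠ 0) {x m : ℕ} (hm : m ≠ 0)
    (hxm : x ≤ m) :
    (k : ℝ) ^ (k * x) ≤ exp 1 ^ k * balancedMultinomial k x * √m ^ (k - 1) := by
  rcases eq_or_ne x 0 with rfl | hx
  · have one_le_exp : 1 ≤ exp 1 ^ k := one_le_pow₀ (Real.one_le_exp zero_le_one)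
    have one_le_sqrt : 1 ≤ √(m : ℝ) ^ (k - 1) :=
      one_le_pow₀ (Real.one_le_sqrt.2 (one_le_cast.2 (one_le_iff_ne_zero.2 hm)))
    simpa [balancedMultinomial] using one_le_mul_of_one_le_of_one_le one_le_exp one_le_sqrt
  · have := balancedMultinomial_pos k x
    refine (pow_mul_le_balancedMultinomial_mul_sqrt_pow hk hx).trans ?_
    gcongr

theorem choose_mul_mul_le (hk : k ≠ 0) {m a : ℕ} (ha : a ≠ 0) (ham : a ≤ m) :
    ((k * m).choose (k * a) : ℝ) ≤
      exp 1 ^ (2 * k + 1) * √k * √a ^ (k - 1) * m.choose a ^ k := by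
  obtain ⟨b, rfl⟩ := Nat.exists_eq_add_of_le ham
  have hm : a + b ≠ 0 := by omega
  have hMa := balancedMultinomial_pos k a
  have hMb := balancedMultinomial_pos k b
  have upper := balancedMultinomial_mul_sqrt_pow_le hk hm
  have lower_a := pow_mul_le_balancedMultinomial_mul_sqrt_pow hk ha
  have lower_b := pow_mul_le_balancedMultinomial_mul_sqrt_pow_of_le hk hm (b.le_add_left a)
  have hpos : 0 < balancedMultinomial k a * balancedMultinomial k b * √(a + b : ℕ) ^ (k - 1) := by
    positivity
  refine le_of_mul_le_mul_right ?_ hpos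
  calc ((k * (a + b)).choose (k * a) : ℝ) *
        (balancedMultinomial k a * balancedMultinomial k b * √(a + b : ℕ) ^ (k - 1))
    _ = (a + b).choose a ^ k *
        (balancedMultinomial k (a + b) * √(a + b : ℕ) ^ (k - 1)) := by
      rw [← mul_assoc, choose_mul_balancedMultinomial, mul_assoc]
    _ ≤ (a + b).choose a ^ k * (exp 1 * √k * k ^ (k * (a + b))) := by gcongr
    _ = (a + b).choose a ^ k * (exp 1 * √k * (k ^ (k * a) * k ^ (k * b))) := by
      rw [mul_add, pow_add]
    _ ≤ (a + b).choose a ^ k * (exp 1 * √k *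
        ((exp 1 ^ k * balancedMultinomial k a * √a ^ (k - 1)) *
          (exp 1 ^ k * balancedMultinomial k b * √(a + b : ℕ) ^ (k - 1)))) := by gcongr
    _ = exp 1 ^ (2 * k + 1) * √k * √a ^ (k - 1) * (a + b).choose a ^ k *
        (balancedMultinomial k a * balancedMultinomial k b * √(a + b : ℕ) ^ (k - 1)) := by ring

end BalancedMultinomial

section DoubleCounting

open Finset
open scoped Pointwise

theorem inter_biUnion_eq_of_pairwiseDisjoint {ι α : Type*} [DecidableEq α] {s : Finset ι}
    {t : ι → Finset α} (ht : (s : Set ι).PairwiseDisjoint t) {f : ∀ i ∈ s, Finset α}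
    (hf : ∀ i hi, f i hi ⊆ t i) {i : ι} (hi : i ∈ s) :
    t i ∩ s.attach.biUnion (fun j => f j.1 j.2) = f i hi := by
  ext x
  simp only [mem_inter, mem_biUnion, mem_attach, true_and, Subtype.exists]
  refine ⟨?_, fun hx => ⟨hf i hi hx, i, hi, hx⟩⟩
  rintro ⟨hxi, j, hj, hxj⟩
  obtain rfl : i = j := ht.elim_finset hi hj x hxi (hf j hj hxj)
  exact hxj

theorem card_filter_forall_card_inter_eq {ι α : Type*} [DecidableEq α] {s : Finset ι}
    {t : ι → Finset α} (ht : (s : Set ι).PairwiseDisjoint t) (c : ι → ℕ) :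
    #{Y ∈ (s.biUnion t).powerset | ∀ i ∈ s, #(t i ∩ Y) = c i} =
      ∏ i ∈ s, (#(t i)).choose (c i) := by
  classical
  simp_rw [← card_powersetCard, ← card_pi]
  refine card_nbij' (fun Y i _ => t i ∩ Y) (fun f => s.attach.biUnion fun i => f i.1 i.2)
    ?_ ?_ ?_ ?_
  · intro Y hY
    have hY := (mem_filter.1 hY).2
    exact mem_pi.2 fun i hi => mem_powersetCard.2 ⟨inter_subset_left, hY i hi⟩
  · intro f hf
    have hf (i hi) := mem_powersetCard.1 (mem_pi.1 hf i hi)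
    refine mem_filter.2 ⟨mem_powerset.2 (biUnion_subset.2 fun i _ => ?_), fun i hi => ?_⟩
    · exact (hf i.1 i.2).1.trans (subset_biUnion_of_mem t i.2)
    · rw [inter_biUnion_eq_of_pairwiseDisjoint ht (fun j hj => (hf j hj).1) hi, (hf i hi).2]
  · intro Y hY
    have hY := mem_powerset.1 (mem_filter.1 hY).1
    change s.attach.biUnion (fun i => t i.1 ∩ Y) = Y
    rw [← biUnion_inter, attach_biUnion, inter_eq_right.2 hY]
  · intro f hf
    have hf (i hi) := (mem_powersetCard.1 (mem_pi.1 hf i hi)).1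
    funext i hi
    exact inter_biUnion_eq_of_pairwiseDisjoint ht hf hi

theorem forall_mem_smul_finset_iff {G α : Type*} [DecidableEq α] [SMul G α] {g : G} {s : Finset α}
    {p : α → Prop} : (∀ y ∈ g • s, p y) ↔ ∀ x ∈ s, p (g • x) :=
  forall_mem_image

theorem disjoint_smul_finset_iff {G α : Type*} [DecidableEq α] [Group G] [MulAction G α] {g : G}
    {s t : Finset α} : Disjoint (g • s) (g • t) ↔ Disjoint s t :=
  disjoint_image (MulAction.injective g)

theorem biUnion_id_smul_finset {G α : Type*} [DecidableEq α] [SMul G α] (g : G)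
    (S : Finset (Finset α)) : (g • S).biUnion id = g • S.biUnion id := by
  simp only [smul_finset_def, image_biUnion, biUnion_image, id]

variable {n ℓ k : ℕ}

theorem IsKDivision.pairwiseDisjoint {D : Finset (Finset (Fin n))}
    (hD : IsKDivision n k D) : (D : Set (Finset (Fin n))).PairwiseDisjoint id :=
  fun I hI J hJ hIJ => hD.2.2.1 I hI J hJ hIJ

theorem IsKDivision.card_eq_of_isGoodDivision {D : Finset (Finset (Fin n))}
    (hD : IsKDivision n k D) (hℓ : k ∣ ℓ) {Y : Finset (Fin n)} (hY : IsGoodDivision n ℓ k Y D) :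
    #Y = ℓ := by
  have ⟨card_D, _, _, union_D⟩ := hD
  have hdisj : (D : Set (Finset (Fin n))).PairwiseDisjoint (· ∩ Y) :=
    hD.pairwiseDisjoint.mono fun _ => inter_subset_left
  calc #Y = #(D.biUnion (· ∩ Y)) := by
        rw [← biUnion_inter, show D.biUnion (fun I => I) = univ from union_D, univ_inter]
    _ = ∑ I ∈ D, #(I ∩ Y) := card_biUnion hdisj
    _ = k * (ℓ / k) := by rw [sum_congr rfl hY, sum_const, card_D, smul_eq_mul]
    _ = ℓ := Nat.mul_div_cancel' hℓ

theorem IsKDivision.card_filter_isGoodDivision {D : Finset (Finset (Fin n))}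
    (hD : IsKDivision n k D) (hℓ : k ∣ ℓ) :
    #{Y ∈ powersetCard ℓ univ | IsGoodDivision n ℓ k Y D} = (n / k).choose (ℓ / k) ^ k := by
  have ⟨card_D, card_block, _, union_D⟩ := hD
  calc #{Y ∈ powersetCard ℓ univ | IsGoodDivision n ℓ k Y D}
    _ = ∏ I ∈ D, (#(id I)).choose (ℓ / k) := by
      rw [← card_filter_forall_card_inter_eq hD.pairwiseDisjoint fun _ => ℓ / k]
      congr 1
      ext Y
      simp only [mem_filter, mem_powersetCard_univ, union_D, powerset_univ, mem_univ, true_and]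
      exact and_iff_right_of_imp fun hY => hD.card_eq_of_isGoodDivision hℓ hY
    _ = (n / k).choose (ℓ / k) ^ k := by
      rw [prod_congr rfl fun I hI => by rw [id, card_block I hI], prod_const, card_D]

theorem isKDivision_smul_iff (σ : Equiv.Perm (Fin n)) {D : Finset (Finset (Fin n))} :
    IsKDivision n k (σ • D) ↔ IsKDivision n k D := by
  simp only [IsKDivision, card_smul_finset, forall_mem_smul_finset_iff, ne_eq,
    smul_left_cancel_iff, disjoint_smul_finset_iff, biUnion_id_smul_finset, smul_finset_eq_univ]

theorem isGoodDivision_smul_smul_iff (σ : Equiv.Perm (Fin n)) {Y : Finset (Fin n)}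
    {D : Finset (Finset (Fin n))} :
    IsGoodDivision n ℓ k (σ • Y) (σ • D) ↔ IsGoodDivision n ℓ k Y D := by
  simp only [IsGoodDivision, forall_mem_smul_finset_iff, ← smul_finset_inter, card_smul_finset]

theorem card_filter_isGoodDivision_congr {Y Z : Finset (Fin n)} (hYZ : #Y = #Z) :
    #{D | IsKDivision n k D ∧ IsGoodDivision n ℓ k Y D} =
      #{D | IsKDivision n k D ∧ IsGoodDivision n ℓ k Z D} := by
  obtain ⟨σ, hσ⟩ := (Set.powersetCard.isPretransitive (α := Fin n)).exists_smul_eq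
    (⟨Y, hYZ⟩ : Set.powersetCard (Fin n) #Z) ⟨Z, rfl⟩
  obtain rfl : σ • Y = Z := congrArg Subtype.val hσ
  refine card_equiv (MulAction.toPerm σ) fun D => ?_
  simp [isKDivision_smul_iff, isGoodDivision_smul_smul_iff]

theorem card_isKDivision_mul_choose_pow (hℓ : k ∣ ℓ) {Y : Finset (Fin n)} (hY : #Y = ℓ) :
    #{D | IsKDivision n k D} * (n / k).choose (ℓ / k) ^ k =
      #{D | IsKDivision n k D ∧ IsGoodDivision n ℓ k Y D} * n.choose ℓ := by
  calc #{D | IsKDivision n k D} * (n / k).choose (ℓ / k) ^ k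
    _ = ∑ D with IsKDivision n k D, #{Z ∈ powersetCard ℓ univ | IsGoodDivision n ℓ k Z D} := by
      rw [sum_congr rfl fun D hD => (mem_filter_univ D |>.1 hD).card_filter_isGoodDivision hℓ,
        sum_const, smul_eq_mul]
    _ = ∑ Z ∈ powersetCard ℓ univ, #{D | IsKDivision n k D ∧ IsGoodDivision n ℓ k Z D} := by
      simp_rw [← filter_filter]
      exact sum_card_bipartiteAbove_eq_sum_card_bipartiteBelow fun D Z => IsGoodDivision n ℓ k Z D
    _ = #{D | IsKDivision n k D ∧ IsGoodDivision n ℓ k Y D} * n.choose ℓ := by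
      rw [sum_congr rfl fun Z hZ => card_filter_isGoodDivision_congr
        ((mem_powersetCard_univ.1 hZ).trans hY.symm), sum_const, card_powersetCard, card_fin,
        smul_eq_mul, mul_comm]

theorem card_isKDivision_le {m a : ℕ} (hk : k ≠ 0) (ha : a ≠ 0) (ham : a ≤ m)
    {Y : Finset (Fin (k * m))} (hY : #Y = k * a) :
    (#{D | IsKDivision (k * m) k D} : ℝ) ≤
      Real.exp 1 ^ (2 * k + 1) * √k * √a ^ (k - 1) *
        #{D | IsKDivision (k * m) k D ∧ IsGoodDivision (k * m) (k * a) k Y D} := by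
  have double_count := card_isKDivision_mul_choose_pow (dvd_mul_right k a) hY
  rw [Nat.mul_div_cancel_left m hk.pos, Nat.mul_div_cancel_left a hk.pos] at double_count
  have choose_pow_pos : (0 : ℝ) < m.choose a ^ k := by
    have := Nat.choose_pos ham
    positivity
  refine le_of_mul_le_mul_right ?_ choose_pow_pos
  calc (#{D | IsKDivision (k * m) k D} : ℝ) * m.choose a ^ k
    _ = #{D | IsKDivision (k * m) k D ∧ IsGoodDivision (k * m) (k * a) k Y D} *
        (k * m).choose (k * a) := mod_cast double_count
    _ ≤ #{D | IsKDivision (k * m) k D ∧ IsGoodDivision (k * m) (k * a) k Y D} *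
        (Real.exp 1 ^ (2 * k + 1) * √k * √a ^ (k - 1) * m.choose a ^ k) := by
      gcongr
      exact choose_mul_mul_le hk ha ham
    _ = Real.exp 1 ^ (2 * k + 1) * √k * √a ^ (k - 1) *
        #{D | IsKDivision (k * m) k D ∧ IsGoodDivision (k * m) (k * a) k Y D} *
          m.choose a ^ k := by ring

end DoubleCounting

theorem rpow_sub_one_div_two_eq_sqrt_pow {x : ℝ} (hx : 0 ≤ x) {k : ℕ} (hk : k ≠ 0) :
    x ^ (((k : ℝ) - 1) / 2) = √x ^ (k - 1) := by
  rw [Real.rpow_div_two_eq_sqrt _ hx, ← Nat.cast_pred hk.pos, Real.rpow_natCast]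

theorem stmt0 (k : ℕ) (hk : 2 ≤ k) :
    ∃ c : ℝ, 0 < c ∧ ∀ n ℓ : ℕ, 0 < n → 0 < ℓ → k ∣ n → k ∣ ℓ → k ≤ ℓ → ℓ ≤ n →
      ∀ Y : Finset (Fin n), Y.card = ℓ →
        c * (ℓ : ℝ) ^ (((1 : ℝ) - (k : ℝ)) / 2) *
            ((Finset.univ.filter (fun D => IsKDivision n k D)).card : ℝ) ≤
          ((Finset.univ.filter
              (fun D => IsKDivision n k D ∧ IsGoodDivision n ℓ k Y D)).card : ℝ) := by
  have hk₀ : k ≠ 0 := by omega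
  set C : ℝ := Real.exp 1 ^ (2 * k + 1) * √k with hC
  have hC_pos : 0 < C := by positivity
  refine ⟨C⁻¹, inv_pos.2 hC_pos, ?_⟩
  rintro n ℓ - hℓ ⟨m, rfl⟩ ⟨a, rfl⟩ - hℓn Y hY
  have ha : a ≠ 0 := (Nat.pos_of_mul_pos_left hℓ).ne'
  have ham : a ≤ m := Nat.le_of_mul_le_mul_left hℓn hk₀.pos
  have a_le : (a : ℝ) ≤ (k * a : ℕ) := mod_cast Nat.le_mul_of_pos_left a hk₀.pos
  have rpow_eq : ((k * a : ℕ) : ℝ) ^ (((1 : ℝ) - k) / 2) = (√(k * a : ℕ) ^ (k - 1))⁻¹ := by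
    rw [← neg_sub, neg_div, Real.rpow_neg (Nat.cast_nonneg _),
      rpow_sub_one_div_two_eq_sqrt_pow (Nat.cast_nonneg _) hk₀]
  rw [rpow_eq, ← mul_inv, inv_mul_le_iff₀ (by positivity)]
  refine (card_isKDivision_le hk₀ ha ham hY).trans ?_
  rw [← hC]
  gcongr
end

section
/- Let k, n, ℓ be positive integers with k ∣ n, k ∣ ℓ, ℓ ≤ n and n ≥ k, and let Y be a subset of Fin n with card Y = ℓ. Then the number of k-divisions of Fin n that are good with respect to Y equals ℓ! · (n−ℓ)! / (k! · ((ℓ/k)!)^k · (((n−ℓ)/k)!)^k). -/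
open Nat

/-!
Coloring each point by whether it lies in `Y`, a good division is an exact cover of the ground set
by `k` blocks of the same color profile `a`. More generally, let `a` be a nonzero profile over any
finite set of colors and let `U` have profile `k • a`. Counting exact covers with a distinguished
block, `k` times their number is the sum, over the `∏ i, (k * a i).choose (a i)` blocks `I ⊆ U` of
profile `a`, of the number of exact covers of `U \ I` by `k - 1` blocks. By induction on `k` the
number of exact covers of `U` is `(∏ i, (k * a i)!) / (k ! * ∏ i, (a i)! ^ k)`.
-/

section ExactCovers

open Finset

variable {α : Type*} [DecidableEq α] {B D : Finset (Finset α)} {I U : Finset α} {k : ℕ}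

/-- The exact covers of `U` by `k` members of the family `B`: the subfamilies of `B` consisting of
`k` pairwise disjoint sets with union `U`. An exact cover may contain the empty set if `B` does. -/
def exactCovers (B : Finset (Finset α)) (k : ℕ) (U : Finset α) : Finset (Finset (Finset α)) :=
  {D ∈ B.powersetCard k | (∀ I ∈ D, ∀ J ∈ D, I ≠ J → Disjoint I J) ∧ D.biUnion id = U}

theorem mem_exactCovers :
    D ∈ exactCovers B k U ↔
      (D ⊆ B ∧ #D = k) ∧ (∀ I ∈ D, ∀ J ∈ D, I ≠ J → Disjoint I J) ∧ D.biUnion id = U := by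
  rw [exactCovers, mem_filter, mem_powersetCard]

theorem exactCovers_zero_empty (B : Finset (Finset α)) : exactCovers B 0 ∅ = {∅} := by
  simp [exactCovers, filter_singleton]

theorem subset_of_mem_exactCovers (hD : D ∈ exactCovers B k U) (hI : I ∈ D) : I ⊆ U :=
  (mem_exactCovers.1 hD).2.2 ▸ subset_biUnion_of_mem id hI

theorem erase_mem_exactCovers (hD : D ∈ exactCovers B (k + 1) U) (hI : I ∈ D) :
    D.erase I ∈ exactCovers B k (U \ I) := by
  obtain ⟨⟨hDB, hcard⟩, hdisj, hunion⟩ := mem_exactCovers.1 hD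
  refine mem_exactCovers.2 ⟨⟨(erase_subset I D).trans hDB, ?_⟩, ?_, ?_⟩
  · rw [card_erase_of_mem hI, hcard, Nat.add_sub_cancel]
  · exact fun J hJ K hK => hdisj J (mem_of_mem_erase hJ) K (mem_of_mem_erase hK)
  · have hI_disj : Disjoint I ((D.erase I).biUnion id) :=
      (disjoint_biUnion_right ..).2 fun J hJ =>
        hdisj I hI J (mem_of_mem_erase hJ) (ne_of_mem_erase hJ).symm
    rw [← hunion, ← insert_erase hI, biUnion_insert, erase_insert_eq_erase, erase_idem, id,
      union_sdiff_cancel_left hI_disj]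

theorem disjoint_of_mem_exactCovers_sdiff (hD : D ∈ exactCovers B k (U \ I)) {J : Finset α}
    (hJ : J ∈ D) : Disjoint I J :=
  disjoint_sdiff.mono_right (subset_of_mem_exactCovers hD hJ)

theorem notMem_of_mem_exactCovers_sdiff (hD : D ∈ exactCovers B k (U \ I)) (hI : I.Nonempty) :
    I ∉ D :=
  fun hID => hI.ne_empty (disjoint_self_iff_empty I |>.1 (disjoint_of_mem_exactCovers_sdiff hD hID))

theorem insert_mem_exactCovers (hD : D ∈ exactCovers B k (U \ I)) (hIB : I ∈ B) (hIU : I ⊆ U)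
    (hI : I.Nonempty) : insert I D ∈ exactCovers B (k + 1) U := by
  have hI_disj : ∀ J ∈ D, Disjoint I J := fun _ => disjoint_of_mem_exactCovers_sdiff hD
  have hID : I ∉ D := notMem_of_mem_exactCovers_sdiff hD hI
  obtain ⟨⟨hDB, hcard⟩, hdisj, hunion⟩ := mem_exactCovers.1 hD
  refine mem_exactCovers.2 ⟨⟨insert_subset hIB hDB, ?_⟩, ?_, ?_⟩
  · rw [card_insert_of_notMem hID, hcard]
  · simp only [forall_mem_insert]
    exact ⟨⟨fun h => absurd rfl h, fun J hJ _ => hI_disj J hJ⟩,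
      fun J hJ => ⟨fun _ => (hI_disj J hJ).symm, hdisj J hJ⟩⟩
  · rw [biUnion_insert, hunion, id, union_sdiff_of_subset hIU]

/-- Both sides count the pairs of an exact cover and a distinguished member of it. -/
theorem card_exactCovers_succ_mul (hB : ∅ ∉ B) (k : ℕ) (U : Finset α) :
    #(exactCovers B (k + 1) U) * (k + 1) = ∑ I ∈ B with I ⊆ U, #(exactCovers B k (U \ I)) := by
  have nonempty_of_mem : ∀ I ∈ B, I.Nonempty := fun I hI =>
    nonempty_iff_ne_empty.2 (ne_of_mem_of_not_mem hI hB)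
  have card_of_mem : ∀ D ∈ exactCovers B (k + 1) U, #D = k + 1 := fun D hD =>
    (mem_exactCovers.1 hD).1.2
  rw [← sum_const_nat card_of_mem, ← card_sigma, ← card_sigma]
  refine card_bij' (fun p _ => ⟨p.2, p.1.erase p.2⟩) (fun p _ => ⟨insert p.1 p.2, p.1⟩) ?_ ?_ ?_ ?_
  · rintro ⟨D, I⟩ h
    obtain ⟨hD, hI⟩ := mem_sigma.1 h
    exact mem_sigma.2 ⟨mem_filter.2 ⟨(mem_exactCovers.1 hD).1.1 hI,
      subset_of_mem_exactCovers hD hI⟩, erase_mem_exactCovers hD hI⟩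
  · rintro ⟨I, D⟩ h
    obtain ⟨hI, hD⟩ := mem_sigma.1 h
    obtain ⟨hIB, hIU⟩ := mem_filter.1 hI
    exact mem_sigma.2 ⟨insert_mem_exactCovers hD hIB hIU (nonempty_of_mem I hIB),
      mem_insert_self I D⟩
  · rintro ⟨D, I⟩ h
    simp only [insert_erase (mem_sigma.1 h).2]
  · rintro ⟨I, D⟩ h
    obtain ⟨hI, hD⟩ := mem_sigma.1 h
    have hID : I ∉ D :=
      notMem_of_mem_exactCovers_sdiff hD (nonempty_of_mem I (mem_filter.1 hI).1)
    simp only [erase_insert hID]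

end ExactCovers

section ColorCount

open Finset

variable {α ι : Type*} [DecidableEq ι] (c : α → ι)

/-- The color profile of `I` under the coloring `c`: how many elements of each color it has. -/
def colorCount (I : Finset α) (i : ι) : ℕ :=
  #{x ∈ I | c x = i}

theorem colorCount_empty : colorCount c ∅ = 0 := rfl

theorem colorCount_eq_zero {I : Finset α} : colorCount c I = 0 ↔ I = ∅ := by
  refine ⟨fun h => eq_empty_of_forall_notMem fun x hx => ?_, fun h => h ▸ colorCount_empty c⟩
  have hx_class : ({y ∈ I | c y = c x} : Finset α) = ∅ := card_eq_zero.1 (congrFun h (c x))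
  exact filter_eq_empty_iff.1 hx_class hx rfl

theorem colorCount_sdiff [DecidableEq α] {I U : Finset α} (h : I ⊆ U) :
    colorCount c (U \ I) = colorCount c U - colorCount c I := by
  ext i
  have filter_sdiff :
      ({x ∈ U \ I | c x = i} : Finset α) = {x ∈ U | c x = i} \ {x ∈ I | c x = i} := by
    grind
  rw [Pi.sub_apply, colorCount, filter_sdiff, card_sdiff_of_subset (filter_subset_filter _ h)]
  rfl

theorem colorCount_decide_mem [DecidableEq α] (Y I : Finset α) :
    colorCount (fun x => decide (x ∈ Y)) I = fun i => cond i #(I ∩ Y) #(I \ Y) := by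
  ext i
  cases i <;> simp [colorCount, filter_mem_eq_inter, filter_notMem_eq_sdiff]

variable [Fintype α] [Fintype ι] (a : ι → ℕ)

/-- The sets whose color profile under `c` is `a`. -/
def blocksOfColorCount : Finset (Finset α) :=
  {I | colorCount c I = a}

variable {c a} in
theorem mem_blocksOfColorCount {I : Finset α} :
    I ∈ blocksOfColorCount c a ↔ colorCount c I = a := by
  simp [blocksOfColorCount]

theorem empty_notMem_blocksOfColorCount (ha : a ≠ 0) : ∅ ∉ blocksOfColorCount c a := by
  rw [mem_blocksOfColorCount, colorCount_empty]
  exact ha.symm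

variable [DecidableEq α]

theorem card_blocksOfColorCount_subset (U : Finset α) :
    #{I ∈ blocksOfColorCount c a | I ⊆ U} = ∏ i, (colorCount c U i).choose (a i) := by
  have filter_biUnion {s : ι → Finset α} (hs : ∀ i, s i ⊆ {x ∈ U | c x = i}) (i : ι) :
      ({x ∈ univ.biUnion s | c x = i} : Finset α) = s i := by
    ext x
    have hx (j : ι) (hj : x ∈ s j) : c x = j := (mem_filter.1 (hs j hj)).2
    grind
  simp only [colorCount, ← card_powersetCard, ← Fintype.card_piFinset]
  refine card_bij' (fun I _ i => {x ∈ I | c x = i}) (fun s _ => univ.biUnion s) ?_ ?_ ?_ ?_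
  · intro I hI
    obtain ⟨hIa, hIU⟩ := mem_filter.1 hI
    exact Fintype.mem_piFinset.2 fun i => mem_powersetCard.2
      ⟨filter_subset_filter _ hIU, congrFun (mem_blocksOfColorCount.1 hIa) i⟩
  · intro s hs
    simp only [Fintype.mem_piFinset, mem_powersetCard] at hs
    refine mem_filter.2 ⟨mem_blocksOfColorCount.2 (funext fun i => ?_), ?_⟩
    · rw [colorCount, filter_biUnion (fun j => (hs j).1), (hs i).2]
    · exact biUnion_subset.2 fun i _ => (hs i).1.trans (filter_subset _ U)
  · intro I _
    ext x
    simp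
  · intro s hs
    simp only [Fintype.mem_piFinset, mem_powersetCard] at hs
    exact funext (filter_biUnion fun i => (hs i).1)

theorem card_exactCovers_blocksOfColorCount_mul (ha : a ≠ 0) (k : ℕ) (U : Finset α)
    (hU : colorCount c U = k • a) :
    #(exactCovers (blocksOfColorCount c a) k U) * (k ! * ∏ i, (a i)! ^ k) = ∏ i, (k * a i)! := by
  induction k generalizing U with
  | zero =>
    obtain rfl : U = ∅ := (colorCount_eq_zero c).1 (by rw [hU, zero_smul])
    simp [exactCovers_zero_empty]
  | succ k ih =>
    have ih_sdiff : ∀ I ∈ {I ∈ blocksOfColorCount c a | I ⊆ U},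
        #(exactCovers (blocksOfColorCount c a) k (U \ I)) * (k ! * ∏ i, (a i)! ^ k) =
          ∏ i, (k * a i)! := by
      intro I hI
      obtain ⟨hIa, hIU⟩ := mem_filter.1 hI
      apply ih
      rw [colorCount_sdiff c hIU, hU, mem_blocksOfColorCount.1 hIa, succ_nsmul,
        add_tsub_cancel_right]
    have choose_mul (i : ι) :
        ((k + 1) * a i).choose (a i) * (k * a i)! * (a i)! = ((k + 1) * a i)! := by
      rw [Nat.succ_mul, Nat.add_choose_mul_factorial_mul_factorial]
    calc #(exactCovers (blocksOfColorCount c a) (k + 1) U) * ((k + 1)! * ∏ i, (a i)! ^ (k + 1))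
        = #(exactCovers (blocksOfColorCount c a) (k + 1) U) * (k + 1) *
            (k ! * ∏ i, (a i)! ^ k) * ∏ i, (a i)! := by
          simp only [Nat.factorial_succ, pow_succ, prod_mul_distrib]
          ring
      _ = (∏ i, ((k + 1) * a i).choose (a i)) * (∏ i, (k * a i)!) * ∏ i, (a i)! := by
          rw [card_exactCovers_succ_mul (empty_notMem_blocksOfColorCount c a ha), sum_mul,
            sum_congr rfl ih_sdiff, sum_const, card_blocksOfColorCount_subset, hU, smul_eq_mul]
          simp only [Pi.smul_apply, smul_eq_mul]
      _ = ∏ i, ((k + 1) * a i)! := by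
          simp only [← prod_mul_distrib, choose_mul]

end ColorCount

theorem isKDivision_and_isGoodDivision_iff {k a b : ℕ} (hk : 0 < k)
    (Y : Finset (Fin (k * (a + b)))) (D : Finset (Finset (Fin (k * (a + b))))) :
    IsKDivision (k * (a + b)) k D ∧ IsGoodDivision (k * (a + b)) (k * a) k Y D ↔
      D ∈ exactCovers (blocksOfColorCount (fun x => decide (x ∈ Y)) fun i => cond i a b) k
        Finset.univ := by
  have block_iff (I : Finset (Fin (k * (a + b)))) :
      colorCount (fun x => decide (x ∈ Y)) I = (fun i => cond i a b) ↔
        I.card = a + b ∧ (I ∩ Y).card = a := by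
    rw [colorCount_decide_mem, funext_iff, Bool.forall_bool, cond_true, cond_true, cond_false,
      cond_false, ← Finset.card_inter_add_card_sdiff I Y]
    omega
  simp only [mem_exactCovers, Finset.subset_iff, mem_blocksOfColorCount, block_iff, IsKDivision,
    IsGoodDivision, Nat.mul_div_cancel_left _ hk]
  grind

theorem stmt2 (n ℓ k : ℕ) (hn : 0 < n) (hl : 0 < ℓ) (hk : 0 < k)
    (hkn : k ∣ n) (hkl : k ∣ ℓ) (hln : ℓ ≤ n) (hnk : k ≤ n)
    (Y : Finset (Fin n)) (hY : Y.card = ℓ) :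
    (Finset.univ.filter
        (fun D => IsKDivision n k D ∧ IsGoodDivision n ℓ k Y D)).card
      = ℓ ! * (n - ℓ)! / (k ! * ((ℓ / k)!) ^ k * (((n - ℓ) / k)!) ^ k) := by
  obtain ⟨a, rfl⟩ := hkl
  obtain ⟨m, rfl⟩ := hkn
  obtain ⟨b, rfl⟩ := Nat.exists_eq_add_of_le (Nat.le_of_mul_le_mul_left hln hk)
  have hsub : k * (a + b) - k * a = k * b := by rw [mul_add, Nat.add_sub_cancel_left]
  have profile_ne_zero : (fun i => cond i a b) ≠ 0 := fun h =>
    (Nat.pos_of_mul_pos_left hl).ne' (congrFun h true)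
  have colorCount_univ :
      colorCount (fun x => decide (x ∈ Y)) Finset.univ = k • fun i => cond i a b := by
    rw [colorCount_decide_mem, Finset.univ_inter, ← Finset.compl_eq_univ_sdiff,
      Finset.card_compl, Fintype.card_fin, hY, hsub]
    ext i
    cases i <;> rfl
  have count := card_exactCovers_blocksOfColorCount_mul _ _ profile_ne_zero k _ colorCount_univ
  simp only [Fintype.prod_bool, cond_true, cond_false, ← mul_assoc] at count
  simp only [isKDivision_and_isGoodDivision_iff hk, Finset.filter_univ_mem, hsub,
    Nat.mul_div_cancel_left _ hk]
  exact Nat.eq_div_of_mul_eq_left (by positivity) (by simpa only [mul_assoc] using count)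
end

section
/- Let k and n be positive integers with k ∣ n. Then k^n · 2^(−k) · k^(k/2) · (2πn)^((1−k)/2) ≤ n! / ((n/k)!)^k ≤ 2 · k^n · k^(k/2) · (2πn)^((1−k)/2), where all expressions are interpreted as real numbers and the exponents k/2 and (1−k)/2 are real exponents. -/
open Nat Real

/-!
With `S n = √(2πn) (n/e)ⁿ` we have `S n ≤ n! ≤ 2 S n` for `n ≥ 1`: the ratio `n! / S n` decreases
to `1`, and at `n = 1` it is `e / √(2π) < 2`. Hence `n! / (m!)ᵏ` agrees with `S n / (S m)ᵏ` up to
a factor between `2⁻ᵏ` and `2`, and for `n = km` the powers of `e` cancel in the latter.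
-/

/-- Stirling's approximation `√(2πn) (n/e)ⁿ` to `n!`, the common factor of the lower and upper
bounds for the factorial. At `n = 0` it is `0`, although `0! = 1`. -/
noncomputable def stirlingApprox (n : ℕ) : ℝ := √(2 * π * n) * (n / exp 1) ^ n

lemma stirlingApprox_pos {n : ℕ} (hn : n ≠ 0) : 0 < stirlingApprox n := by
  unfold stirlingApprox
  positivity

lemma stirlingApprox_le_factorial (n : ℕ) : stirlingApprox n ≤ n ! :=
  Stirling.le_factorial_stirling n

lemma factorial_eq_stirlingSeq_div_sqrt_pi_mul_stirlingApprox {n : ℕ} (hn : n ≠ 0) :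
    (n ! : ℝ) = Stirling.stirlingSeq n / √π * stirlingApprox n := by
  have sqrt_split : √(2 * π * n) = √π * √(2 * n) := by
    rw [← sqrt_mul pi_nonneg, mul_left_comm, mul_assoc]
  rw [Stirling.stirlingSeq, stirlingApprox, sqrt_split]
  field_simp

lemma stirlingSeq_le_exp_one_div_sqrt_two (n : ℕ) : Stirling.stirlingSeq n ≤ exp 1 / √2 := by
  cases n with
  | zero => rw [Stirling.stirlingSeq_zero]; positivity
  | succ m => exact Stirling.stirlingSeq_one ▸ Stirling.stirlingSeq'_antitone m.zero_le

lemma exp_one_div_sqrt_two_le_two_mul_sqrt_pi : exp 1 / √2 ≤ 2 * √π := by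
  have one_le_sqrt_two : 1 ≤ √2 := one_le_sqrt.mpr one_le_two
  have three_halves_le_sqrt_pi : 3 / 2 ≤ √π := le_sqrt_of_sq_le (by linarith [pi_gt_three])
  calc exp 1 / √2 ≤ exp 1 := div_le_self (exp_pos 1).le one_le_sqrt_two
    _ ≤ 3 := exp_one_lt_three.le
    _ ≤ 2 * √π := by linarith

lemma factorial_le_two_mul_stirlingApprox {n : ℕ} (hn : n ≠ 0) :
    (n ! : ℝ) ≤ 2 * stirlingApprox n := by
  have stirlingSeq_le : Stirling.stirlingSeq n ≤ 2 * √π :=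
    (stirlingSeq_le_exp_one_div_sqrt_two n).trans exp_one_div_sqrt_two_le_two_mul_sqrt_pi
  rw [factorial_eq_stirlingSeq_div_sqrt_pi_mul_stirlingApprox hn]
  gcongr
  · exact (stirlingApprox_pos hn).le
  · exact (div_le_iff₀ (sqrt_pos.mpr pi_pos)).mpr stirlingSeq_le

lemma factorial_div_factorial_pow_le {n m : ℕ} (hn : n ≠ 0) (hm : m ≠ 0) (k : ℕ) :
    (n ! : ℝ) / (m ! : ℝ) ^ k ≤ 2 * (stirlingApprox n / stirlingApprox m ^ k) := by
  have approx_n_pos := stirlingApprox_pos hn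
  have approx_m_pos := stirlingApprox_pos hm
  rw [← mul_div_assoc]
  gcongr
  · exact factorial_le_two_mul_stirlingApprox hn
  · exact stirlingApprox_le_factorial m

lemma le_factorial_div_factorial_pow (n : ℕ) {m : ℕ} (hm : m ≠ 0) (k : ℕ) :
    (2 ^ k)⁻¹ * (stirlingApprox n / stirlingApprox m ^ k) ≤ (n ! : ℝ) / (m ! : ℝ) ^ k :=
  calc (2 ^ k)⁻¹ * (stirlingApprox n / stirlingApprox m ^ k)
      = stirlingApprox n / (2 * stirlingApprox m) ^ k := by rw [mul_pow]; field_simp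
    _ ≤ n ! / (m ! : ℝ) ^ k := by
      gcongr
      · exact stirlingApprox_le_factorial n
      · exact factorial_le_two_mul_stirlingApprox hm

lemma sqrt_mul_div_sqrt_pow {a x : ℝ} (ha : 0 < a) (hx : 0 < x) (k : ℕ) :
    √(a * x) / √x ^ k = a ^ ((k : ℝ) / 2) * (a * x) ^ ((1 - (k : ℝ)) / 2) := by
  rw [rpow_div_two_eq_sqrt _ ha.le, rpow_div_two_eq_sqrt _ (by positivity),
    rpow_sub (by positivity), rpow_one, rpow_natCast, rpow_natCast, sqrt_mul ha.le, mul_pow]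
  field_simp

lemma stirlingApprox_mul_div_pow {k m : ℕ} (hk : k ≠ 0) (hm : m ≠ 0) :
    stirlingApprox (k * m) / stirlingApprox m ^ k =
      (k : ℝ) ^ (k * m) * (k : ℝ) ^ ((k : ℝ) / 2) *
        (2 * π * (k * m : ℕ)) ^ ((1 - (k : ℝ)) / 2) := by
  have pow_ratio : ((k * m : ℕ) / exp 1) ^ (k * m) / ((m / exp 1) ^ m) ^ k =
      (k : ℝ) ^ (k * m) := by
    rw [← pow_mul', ← div_pow]
    congr 1
    push_cast
    field_simp
  have sqrt_ratio := sqrt_mul_div_sqrt_pow (a := k) (x := 2 * π * m) (by positivity)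
    (by positivity) k
  have arg_eq : (k : ℝ) * (2 * π * m) = 2 * π * (k * m : ℕ) := by push_cast; ring
  rw [arg_eq] at sqrt_ratio
  rw [stirlingApprox, stirlingApprox, mul_pow, mul_div_mul_comm, sqrt_ratio, pow_ratio]
  ring

theorem stmt3 (n k : ℕ) (hn : 0 < n) (hk : 0 < k) (hkn : k ∣ n) :
    (k : ℝ) ^ n * (2 : ℝ) ^ (-(k : ℝ)) * (k : ℝ) ^ ((k : ℝ) / 2) *
        (2 * Real.pi * n) ^ ((1 - (k : ℝ)) / 2)
      ≤ (n ! : ℝ) / ((n / k)! : ℝ) ^ k ∧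
    (n ! : ℝ) / ((n / k)! : ℝ) ^ k
      ≤ 2 * (k : ℝ) ^ n * (k : ℝ) ^ ((k : ℝ) / 2) *
        (2 * Real.pi * n) ^ ((1 - (k : ℝ)) / 2) := by
  obtain ⟨m, rfl⟩ := hkn
  have hm : m ≠ 0 := (Nat.pos_of_mul_pos_left hn).ne'
  have lower := le_factorial_div_factorial_pow (k * m) hm k
  have upper := factorial_div_factorial_pow_le hn.ne' hm k
  rw [stirlingApprox_mul_div_pow hk.ne' hm] at lower upper
  rw [Nat.mul_div_cancel_left m hk, rpow_neg zero_le_two, rpow_natCast]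
  constructor
  · convert lower using 1
    ring
  · convert upper using 1
    ring
end

section
/- Let k, n, ℓ be positive integers with k ∣ n, k ∣ ℓ and ℓ ≤ n. For i ∈ ZMod n let B_i = {i, i+1, ..., i + n/k − 1} ⊆ ZMod n be the set of n/k consecutive residues starting at i. Then for every subset Y of ZMod n with card Y = ℓ there exists i ∈ ZMod n such that card (B_i ∩ Y) = ℓ/k. -/
/-!
Sliding the block `B_i` one step gains at most one point of `Y`, so on its way around the cycle
`#(B_i ∩ Y)` cannot jump over a value on the way up. Its average over all `i` is `w * #Y / n`, where
`w` is the width, so every natural number at distance less than `1` from this average is attained.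
For `w = n / k` the number `#Y / k` is within distance `1` of the average even when both divisions
are rounded down.
-/

open Finset

theorem exists_apply_eq_of_apply_add_one_le {f : ℕ → ℕ} (hf : ∀ t, f (t + 1) ≤ f t + 1)
    {m : ℕ} (h0 : f 0 ≤ m) : ∀ {N : ℕ}, m ≤ f N → ∃ t, f t = m
  | 0, hN => ⟨0, h0.antisymm hN⟩
  | N + 1, hN => by
    rcases hN.eq_or_lt with heq | hlt
    · exact ⟨N + 1, heq.symm⟩
    · exact exists_apply_eq_of_apply_add_one_le hf h0 (Nat.le_of_lt_succ (hlt.trans_le (hf N)))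

theorem card_filter_add_right_mem {G : Type*} [AddGroup G] [Fintype G] [DecidableEq G]
    (Y : Finset G) (g : G) : #{x | x + g ∈ Y} = #Y :=
  card_equiv (Equiv.addRight g) (by simp)

section Cyclic

variable {n : ℕ} [NeZero n]

theorem exists_apply_eq_of_apply_add_one_le_zmod {f : ZMod n → ℕ} (hf : ∀ i, f (i + 1) ≤ f i + 1)
    {m : ℕ} {a b : ZMod n} (ha : f a ≤ m) (hb : m ≤ f b) : ∃ i, f i = m := by
  have hstep (t : ℕ) : f (a + (t + 1 : ℕ)) ≤ f (a + t) + 1 := by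
    simpa only [Nat.cast_succ, add_assoc] using hf (a + t)
  have hstart : f (a + (0 : ℕ)) ≤ m := by simpa using ha
  have hend : m ≤ f (a + (b - a).val) := by simpa using hb
  obtain ⟨t, ht⟩ := exists_apply_eq_of_apply_add_one_le (f := fun t ↦ f (a + t)) hstep hstart hend
  exact ⟨a + t, ht⟩

theorem exists_apply_eq_of_sum_lt_of_lt_sum {f : ZMod n → ℕ} (hf : ∀ i, f (i + 1) ≤ f i + 1) {m : ℕ}
    (hlt : ∑ i, f i < n * (m + 1)) (hgt : n * m < ∑ i, f i + n) : ∃ i, f i = m := by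
  obtain ⟨a, -, ha⟩ : ∃ a ∈ univ, f a < m + 1 :=
    exists_lt_of_sum_lt (by simpa [ZMod.card] using hlt)
  obtain ⟨b, -, hb⟩ : ∃ b ∈ univ, m < f b + 1 :=
    exists_lt_of_sum_lt (by simpa [sum_add_distrib, ZMod.card] using hgt)
  exact exists_apply_eq_of_apply_add_one_le_zmod hf (Nat.le_of_lt_succ ha) (Nat.le_of_lt_succ hb)

end Cyclic

/-- The block `B_i` of `w` consecutive residues modulo `n` starting at `i`, the sliding window of
the argument. Residues repeat, so it has fewer than `w` elements, if `0 < n < w`. -/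
def cyclicBlock {n : ℕ} (w : ℕ) (i : ZMod n) : Finset (ZMod n) :=
  (range w).image fun j : ℕ ↦ i + (j : ZMod n)

section CyclicBlock

variable {n : ℕ}

theorem cyclicBlock_add_one_subset (w : ℕ) (i : ZMod n) :
    cyclicBlock w (i + 1) ⊆ insert (i + (w : ZMod n)) (cyclicBlock w i) := by
  have himage : cyclicBlock (w + 1) i = insert (i + (w : ZMod n)) (cyclicBlock w i) := by
    simp only [cyclicBlock, range_add_one, image_insert]
  rw [← himage]
  refine image_subset_iff.2 fun j hj ↦ mem_image.2 ⟨j + 1, by simpa using hj, ?_⟩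
  push_cast
  ring

theorem card_cyclicBlock_add_one_inter_le (w : ℕ) (Y : Finset (ZMod n)) (i : ZMod n) :
    #(cyclicBlock w (i + 1) ∩ Y) ≤ #(cyclicBlock w i ∩ Y) + 1 := by
  calc #(cyclicBlock w (i + 1) ∩ Y)
    _ ≤ #(insert (i + (w : ZMod n)) (cyclicBlock w i ∩ Y)) := by
      refine card_le_card ((inter_subset_inter_right (cyclicBlock_add_one_subset w i)).trans ?_)
      rw [insert_inter_distrib]
      exact inter_subset_inter_left (subset_insert _ _)
    _ ≤ #(cyclicBlock w i ∩ Y) + 1 := card_insert_le _ _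

theorem card_cyclicBlock_inter {w : ℕ} (hw : w ≤ n) (Y : Finset (ZMod n)) (i : ZMod n) :
    #(cyclicBlock w i ∩ Y) = #{j ∈ range w | i + ((j : ℕ) : ZMod n) ∈ Y} := by
  have hinj : Set.InjOn (fun j : ℕ ↦ i + (j : ZMod n)) (range w) := fun a ha b hb hab ↦
    CharP.natCast_injOn_Iio (ZMod n) n ((mem_range.1 ha).trans_le hw)
      ((mem_range.1 hb).trans_le hw) (add_left_cancel hab)
  rw [cyclicBlock, ← filter_mem_eq_inter, filter_image]
  exact card_image_of_injOn (hinj.mono (filter_subset _ _))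

variable [NeZero n]

theorem sum_card_cyclicBlock_inter {w : ℕ} (hw : w ≤ n) (Y : Finset (ZMod n)) :
    ∑ i, #(cyclicBlock w i ∩ Y) = w * #Y := by
  calc ∑ i, #(cyclicBlock w i ∩ Y)
    _ = ∑ i : ZMod n, #{j ∈ range w | i + ((j : ℕ) : ZMod n) ∈ Y} := by
      simp only [card_cyclicBlock_inter hw]
    _ = ∑ j ∈ range w, #{i : ZMod n | i + (j : ZMod n) ∈ Y} :=
      sum_card_bipartiteAbove_eq_sum_card_bipartiteBelow fun (i : ZMod n) (j : ℕ) ↦ i + j ∈ Y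
    _ = w * #Y := by simp [card_filter_add_right_mem]

theorem exists_card_cyclicBlock_inter_eq {w m : ℕ} (hw : w ≤ n) (Y : Finset (ZMod n))
    (hlt : w * #Y < n * (m + 1)) (hgt : n * m < w * #Y + n) :
    ∃ i, #(cyclicBlock w i ∩ Y) = m := by
  rw [← sum_card_cyclicBlock_inter hw] at hlt hgt
  exact exists_apply_eq_of_sum_lt_of_lt_sum (card_cyclicBlock_add_one_inter_le w Y) hlt hgt

end CyclicBlock

theorem div_mul_lt_mul_div_add_one {n k : ℕ} (hn : 0 < n) (hk : 0 < k) (ℓ : ℕ) :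
    n / k * ℓ < n * (ℓ / k + 1) := by
  rcases (n / k).eq_zero_or_pos with hw | hw
  · rw [hw, zero_mul]
    positivity
  · calc n / k * ℓ
      _ < n / k * (k * (ℓ / k + 1)) := by gcongr; exact Nat.lt_mul_div_succ ℓ hk
      _ = n / k * k * (ℓ / k + 1) := (mul_assoc ..).symm
      _ ≤ n * (ℓ / k + 1) := by gcongr; exact Nat.div_mul_le_self n k

theorem mul_div_lt_div_mul_add {n k ℓ : ℕ} (hn : 0 < n) (hk : 0 < k) (hln : ℓ ≤ n) :
    n * (ℓ / k) < n / k * ℓ + n := by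
  have hrem : n % k * (ℓ / k) < n := by
    rcases (ℓ / k).eq_zero_or_pos with hm | hm
    · rwa [hm, mul_zero]
    · calc n % k * (ℓ / k)
        _ < k * (ℓ / k) := by gcongr; exact Nat.mod_lt n hk
        _ ≤ n := (Nat.mul_div_le ℓ k).trans hln
  calc n * (ℓ / k)
    _ = (k * (n / k) + n % k) * (ℓ / k) := by rw [Nat.div_add_mod]
    _ = n / k * (k * (ℓ / k)) + n % k * (ℓ / k) := by ring
    _ < n / k * ℓ + n := add_lt_add_of_le_of_lt (by gcongr; exact Nat.mul_div_le ℓ k) hrem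

theorem stmt4_general {n k : ℕ} (hn : 0 < n) (hk : 0 < k) (Y : Finset (ZMod n)) :
    ∃ i, #(cyclicBlock (n / k) i ∩ Y) = #Y / k := by
  have : NeZero n := ⟨hn.ne'⟩
  have hcard : #Y ≤ n := by simpa only [ZMod.card] using card_le_univ Y
  exact exists_card_cyclicBlock_inter_eq (Nat.div_le_self n k) Y
    (div_mul_lt_mul_div_add_one hn hk #Y) (mul_div_lt_div_mul_add hn hk hcard)

theorem stmt4 (n ℓ k : ℕ) (hn : 0 < n) (hl : 0 < ℓ) (hk : 0 < k)
    (hkn : k ∣ n) (hkl : k ∣ ℓ) (hln : ℓ ≤ n)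
    (Y : Finset (ZMod n)) (hY : Y.card = ℓ) :
    ∃ i : ZMod n,
      (((Finset.range (n / k)).image (fun (j : ℕ) => i + (j : ZMod n))) ∩ Y).card
        = ℓ / k := by
  subst hY
  exact stmt4_general hn hk Y
end

section
/- Let k ≥ 2 and let n, ℓ be positive integers with k ∣ n, k ∣ ℓ, ℓ ≤ n and n ≥ k. Then there exists a finite set D of k-divisions of Fin n with card D < n^(k−1) such that for every subset Y of Fin n with card Y = ℓ, some k-division in D is good with respect to Y (i.e., D is an (n, ℓ, k)-splitting system with fewer than n^(k−1) divisions). -/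
/-!
Enumerate a set `S` of `(j + 1) * m` points and let `f i` be the number of points of `Y` among the
`m` consecutive points starting at the `i`-th one. Then `f` changes by at most one per step, and
when `Y` has `(j + 1) * c` points in `S` the average of `f` over the starting points
`0, m, …, j * m` is `c`. Hence `f i = c` for some `i`, and even for some `i < j * m`: if `c` is
attained at `j * m`, then it is still the average over the remaining starting points. So `j * m`
windows suffice to cut off a block containing `c` points of `Y`. Recursing on the complement gives
at most `j! * m ^ j` divisions into `j + 1` blocks, fewer than `((j + 1) * m) ^ j`.
-/

open Finset

section UnitSteps

variable {f : ℕ → ℤ} {c : ℤ}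

theorem exists_mem_Icc_eq_of_succ_le_add_one (hf : ∀ i, f (i + 1) ≤ f i + 1) {a b : ℕ}
    (hab : a ≤ b) (ha : f a ≤ c) (hb : c ≤ f b) : ∃ i ∈ Icc a b, f i = c := by
  induction b, hab using Nat.le_induction with
  | base => exact ⟨a, by simp, le_antisymm ha hb⟩
  | succ b hab ih =>
    obtain hlt | hle := lt_or_ge (f b) c
    · exact ⟨b + 1, by simp only [mem_Icc]; omega, by linarith [hf b]⟩
    · obtain ⟨i, hi, hic⟩ := ih hle
      exact ⟨i, Icc_subset_Icc_right b.le_succ hi, hic⟩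

theorem exists_mem_uIcc_eq_of_abs_succ_sub_le_one (hf : ∀ i, |f (i + 1) - f i| ≤ 1) {a b : ℕ}
    (ha : f a ≤ c) (hb : c ≤ f b) : ∃ i ∈ uIcc a b, f i = c := by
  obtain hab | hba := le_total a b
  · rw [uIcc_of_le hab]
    exact exists_mem_Icc_eq_of_succ_le_add_one (fun i ↦ by linarith [(abs_le.mp (hf i)).2])
      hab ha hb
  · rw [uIcc_of_ge hba]
    obtain ⟨i, hi, hic⟩ := exists_mem_Icc_eq_of_succ_le_add_one (f := -f) (c := -c)
      (fun i ↦ by simp only [Pi.neg_apply]; linarith [(abs_le.mp (hf i)).1])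
      hba (neg_le_neg hb) (neg_le_neg ha)
    exact ⟨i, hi, neg_injective hic⟩

theorem exists_le_mem_eq_of_sum_eq (hf : ∀ i, |f (i + 1) - f i| ≤ 1) {s : Finset ℕ}
    (hs : s.Nonempty) (hsum : ∑ i ∈ s, f i = #s * c) : ∃ b ∈ s, ∃ i ≤ b, f i = c := by
  have hsum_const : ∑ i ∈ s, f i = ∑ _i ∈ s, c := by rw [hsum, sum_const, nsmul_eq_mul]
  obtain ⟨a, ha, hac⟩ := exists_le_of_sum_le hs hsum_const.le
  obtain ⟨b, hb, hcb⟩ := exists_le_of_sum_le hs hsum_const.ge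
  obtain ⟨i, hi, hic⟩ := exists_mem_uIcc_eq_of_abs_succ_sub_le_one hf hac hcb
  obtain hia | hib := le_sup_iff.mp (mem_uIcc.mp hi).2
  · exact ⟨a, ha, i, hia, hic⟩
  · exact ⟨b, hb, i, hib, hic⟩

theorem exists_lt_mem_eq_of_sum_eq (hf : ∀ i, |f (i + 1) - f i| ≤ 1) {s : Finset ℕ}
    (hs : s.Nontrivial) (hsum : ∑ i ∈ s, f i = #s * c) : ∃ b ∈ s, ∃ i < b, f i = c := by
  obtain ⟨b, hb, i, hib, hic⟩ := exists_le_mem_eq_of_sum_eq hf hs.nonempty hsum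
  obtain hib | rfl := hib.lt_or_eq
  · exact ⟨b, hb, i, hib, hic⟩
  have hsum_erase : ∑ t ∈ s.erase i, f t = #(s.erase i) * c := by
    rw [sum_erase_eq_sub hb, cast_card_erase_of_mem hb, hsum, hic]
    ring
  obtain ⟨b', hb', i', hib', hic'⟩ :=
    exists_le_mem_eq_of_sum_eq hf ((erase_nonempty hb).mpr hs) hsum_erase
  obtain ⟨hne, hb's⟩ := mem_erase.mp hb'
  obtain hlt | hgt := hne.lt_or_gt
  · exact ⟨i, hb, i', hib'.trans_lt hlt, hic'⟩
  · exact ⟨b', hb's, i, hgt, hic⟩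

end UnitSteps

section Window

variable {α : Type*}

/-- The `m` consecutive entries of `L` starting at position `i`; fewer than `m` if `L` ends before
position `i + m`. -/
def listWindow (L : List α) (m i : ℕ) : List α :=
  (L.drop i).take m

variable (p : α → Bool) (L : List α) (m : ℕ)

theorem countP_take_add_eq_add_countP_listWindow (i : ℕ) :
    (L.take (i + m)).countP p = (L.take i).countP p + (listWindow L m i).countP p := by
  rw [List.take_add, List.countP_append, listWindow]

theorem countP_take_succ_mem_Icc (i : ℕ) :
    (L.take (i + 1)).countP p ∈ Set.Icc ((L.take i).countP p) ((L.take i).countP p + 1) := by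
  have hle : (listWindow L 1 i).countP p ≤ 1 :=
    List.countP_le_length.trans (List.length_take_le _ _)
  rw [countP_take_add_eq_add_countP_listWindow]
  exact ⟨Nat.le_add_right _ _, Nat.add_le_add_left hle _⟩

theorem abs_countP_listWindow_succ_sub_le_one (i : ℕ) :
    |((listWindow L m (i + 1)).countP p : ℤ) - (listWindow L m i).countP p| ≤ 1 := by
  have hi := countP_take_succ_mem_Icc p L i
  have him := countP_take_succ_mem_Icc p L (i + m)
  have hwin := countP_take_add_eq_add_countP_listWindow p L m i
  have hwin_succ := countP_take_add_eq_add_countP_listWindow p L m (i + 1)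
  rw [Nat.add_right_comm] at hwin_succ
  rw [Set.mem_Icc] at hi him
  rw [abs_le]
  omega

theorem sum_countP_listWindow_mul (j : ℕ) :
    ∑ t ∈ range j, (listWindow L m (t * m)).countP p = (L.take (j * m)).countP p := by
  induction j with
  | zero => simp
  | succ j ih =>
    rw [sum_range_succ, ih, Nat.succ_mul, countP_take_add_eq_add_countP_listWindow]

variable {p L m}

theorem exists_countP_listWindow_eq {j c : ℕ} (hj : 0 < j) (hm : 0 < m)
    (hL : L.length = (j + 1) * m) (hc : L.countP p = (j + 1) * c) :
    ∃ i < j * m, (listWindow L m i).countP p = c := by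
  have hinj : Function.Injective (· * m) := mul_left_injective₀ hm.ne'
  have hsum : ∑ i ∈ (range (j + 1)).image (· * m), ((listWindow L m i).countP p : ℤ) =
      #((range (j + 1)).image (· * m)) * c := by
    rw [sum_image hinj.injOn, card_image_of_injective _ hinj, card_range]
    have hsum_nat := sum_countP_listWindow_mul p L m (j + 1)
    rw [← hL, List.take_length, hc] at hsum_nat
    exact_mod_cast hsum_nat
  have hnontrivial : ((range (j + 1)).image (· * m)).Nontrivial := by
    rw [← one_lt_card_iff_nontrivial, card_image_of_injective _ hinj, card_range]
    omega
  obtain ⟨b, hb, i, hib, hic⟩ := exists_lt_mem_eq_of_sum_eq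
    (abs_countP_listWindow_succ_sub_le_one p L m) hnontrivial hsum
  obtain ⟨t, ht, rfl⟩ := mem_image.mp hb
  have htj : t * m ≤ j * m := Nat.mul_le_mul_right m (Nat.le_of_lt_succ (mem_range.mp ht))
  exact ⟨i, hib.trans_le htj, by exact_mod_cast hic⟩

end Window

section Splitting

variable {α : Type*} [DecidableEq α] {S : Finset α} {m c k : ℕ}

theorem card_toFinset_inter_eq_countP {L : List α} (hL : L.Nodup) (Y : Finset α) :
    #(L.toFinset ∩ Y) = L.countP (· ∈ Y) := by
  have hfilter : L.toFinset ∩ Y = (L.filter (· ∈ Y)).toFinset := by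
    ext x
    simp
  rw [hfilter, List.toFinset_card_of_nodup (hL.filter _), List.countP_eq_length_filter]

/-- A family of `m`-element subsets of `S`, the candidates for a single block: each `Y` with
`k * c` points in `S` has exactly `c` points in some member of the family. -/
structure IsBlockFamily (S : Finset α) (m c k : ℕ) (W : Finset (Finset α)) : Prop where
  subset : ∀ w ∈ W, w ⊆ S
  card_eq : ∀ w ∈ W, #w = m
  exists_card_inter_eq : ∀ Y, #(S ∩ Y) = k * c → ∃ w ∈ W, #(w ∩ Y) = c

/-- A splitting system on `S`: partitions of `S` into blocks of cardinality `m` such that each `Y`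
with `k * c` points in `S` has exactly `c` points in every block of some partition of the system.
The number `k` of blocks is not recorded in the partitions, as it is determined by `#S = k * m`. -/
structure IsSplittingSystem (m c k : ℕ) (D : Finset (Finpartition S)) : Prop where
  card_eq : ∀ P ∈ D, ∀ I ∈ P.parts, #I = m
  exists_card_inter_eq : ∀ Y, #(S ∩ Y) = k * c → ∃ P ∈ D, ∀ I ∈ P.parts, #(I ∩ Y) = c

theorem exists_isBlockFamily (c : ℕ) {j : ℕ} (hj : 0 < j) (hm : 0 < m) (hS : #S = (j + 1) * m) :
    ∃ W, IsBlockFamily S m c (j + 1) W ∧ #W ≤ j * m := by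
  have hsublist (i : ℕ) : (listWindow S.toList m i).Sublist S.toList :=
    (List.take_sublist _ _).trans (List.drop_sublist _ _)
  have hnodup (i : ℕ) : (listWindow S.toList m i).Nodup := S.nodup_toList.sublist (hsublist i)
  refine ⟨(range (j * m)).image fun i ↦ (listWindow S.toList m i).toFinset,
    ⟨?_, ?_, fun Y hY ↦ ?_⟩, card_image_le.trans_eq (card_range _)⟩
  · simp only [forall_mem_image]
    intro i _ x hx
    exact mem_toList.mp ((hsublist i).subset (List.mem_toFinset.mp hx))
  · simp only [forall_mem_image, mem_range]
    intro i hi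
    have hfit : m ≤ #S - i := by rw [hS, Nat.succ_mul]; omega
    rw [List.toFinset_card_of_nodup (hnodup i), listWindow, List.length_take, List.length_drop,
      length_toList, min_eq_left hfit]
  · have hcount : S.toList.countP (· ∈ Y) = (j + 1) * c := by
      rw [← card_toFinset_inter_eq_countP S.nodup_toList, toList_toFinset, hY]
    obtain ⟨i, hi, hic⟩ := exists_countP_listWindow_eq hj hm (S.length_toList.trans hS) hcount
    exact ⟨_, mem_image_of_mem _ (mem_range.mpr hi),
      (card_toFinset_inter_eq_countP (hnodup i) Y).trans hic⟩

theorem isSplittingSystem_singleton_indiscrete (c : ℕ) (hS : S ≠ ⊥) :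
    IsSplittingSystem #S c 1 {Finpartition.indiscrete hS} where
  card_eq := by simp
  exists_card_inter_eq := by simp

theorem IsBlockFamily.exists_isSplittingSystem {W : Finset (Finset α)} {N : ℕ}
    (hW : IsBlockFamily S m c (k + 1) W) (hm : 0 < m)
    (hsdiff : ∀ w ∈ W, ∃ D : Finset (Finpartition (S \ w)), IsSplittingSystem m c k D ∧ #D ≤ N) :
    ∃ D : Finset (Finpartition S), IsSplittingSystem m c (k + 1) D ∧ #D ≤ #W * N := by
  choose! E hE hEN using hsdiff
  have hne (w : W) : (w : Finset α) ≠ ⊥ := by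
    rw [bot_eq_empty, ← nonempty_iff_ne_empty, ← card_pos, hW.card_eq w w.2]
    exact hm
  let extendBy (w : W) (P : Finpartition (S \ w)) : Finpartition S :=
    P.extend (hne w) disjoint_sdiff_self_left (sdiff_union_of_subset (hW.subset w w.2))
  refine ⟨W.attach.biUnion fun w ↦ (E w).image (extendBy w), ⟨?_, fun Y hY ↦ ?_⟩, ?_⟩
  · simp only [mem_biUnion, mem_image]
    rintro _ ⟨w, -, P, hP, rfl⟩
    exact (forall_mem_insert _ _ _).mpr ⟨hW.card_eq w w.2, (hE w w.2).card_eq P hP⟩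
  · obtain ⟨w, hw, hwY⟩ := hW.exists_card_inter_eq Y hY
    have hrest : #((S \ w) ∩ Y) = k * c := by
      have hinter : (S \ w) ∩ Y = (S ∩ Y) \ (w ∩ Y) := by
        ext x
        simp only [mem_inter, mem_sdiff]
        tauto
      rw [hinter, card_sdiff_of_subset (inter_subset_inter_right (hW.subset w hw)), hY, hwY,
        Nat.succ_mul, Nat.add_sub_cancel]
    obtain ⟨P, hP, hPY⟩ := (hE w hw).exists_card_inter_eq Y hrest
    exact ⟨extendBy ⟨w, hw⟩ P,
      mem_biUnion.mpr ⟨⟨w, hw⟩, mem_attach _ _, mem_image_of_mem _ hP⟩,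
      (forall_mem_insert _ _ _).mpr ⟨hwY, hPY⟩⟩
  · rw [← card_attach (s := W)]
    exact card_biUnion_le_card_mul _ _ N fun w _ ↦ card_image_le.trans (hEN w w.2)

theorem exists_isSplittingSystem_card_le (c : ℕ) (hm : 0 < m) (j : ℕ) (hS : #S = (j + 1) * m) :
    ∃ D : Finset (Finpartition S), IsSplittingSystem m c (j + 1) D ∧
      #D ≤ j.factorial * m ^ j := by
  induction j generalizing S with
  | zero =>
    obtain rfl : #S = m := by simpa using hS
    exact ⟨_, isSplittingSystem_singleton_indiscrete c (card_pos.mp hm).ne_empty, by simp⟩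
  | succ j ih =>
    obtain ⟨W, hW, hWcard⟩ := exists_isBlockFamily c j.succ_pos hm hS
    have hsdiff (w) (hw : w ∈ W) : #(S \ w) = (j + 1) * m := by
      rw [card_sdiff_of_subset (hW.subset w hw), hS, hW.card_eq w hw, Nat.succ_mul (j + 1),
        Nat.add_sub_cancel]
    obtain ⟨D, hD, hDcard⟩ := hW.exists_isSplittingSystem hm fun w hw ↦ ih (hsdiff w hw)
    refine ⟨D, hD, hDcard.trans ?_⟩
    calc #W * (j.factorial * m ^ j) ≤ (j + 1) * m * (j.factorial * m ^ j) := by gcongr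
      _ = (j + 1).factorial * m ^ (j + 1) := by rw [Nat.factorial_succ]; ring

end Splitting

theorem isKDivision_parts {n k : ℕ} (hn : 0 < n) (hkn : k ∣ n)
    (P : Finpartition (univ : Finset (Fin n))) (hP : ∀ I ∈ P.parts, #I = n / k) :
    IsKDivision n k P.parts := by
  have hcard : #P.parts * (n / k) = k * (n / k) := by
    rw [← sum_const_nat hP, P.sum_card_parts, card_fin, Nat.mul_div_cancel' hkn]
  have hpos : 0 < n / k := Nat.div_pos (Nat.le_of_dvd hn hkn) (Nat.pos_of_dvd_of_pos hkn hn)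
  exact ⟨Nat.eq_of_mul_eq_mul_right hpos hcard, hP,
    fun I hI J hJ ↦ P.disjoint hI hJ, P.biUnion_parts⟩

theorem factorial_mul_pow_lt_succ_mul_pow {j m : ℕ} (hj : 0 < j) (hm : 0 < m) :
    j.factorial * m ^ j < ((j + 1) * m) ^ j := by
  rw [mul_pow]
  gcongr
  exact (Nat.factorial_le_pow j).trans_lt (Nat.pow_lt_pow_left j.lt_succ_self hj.ne')

theorem stmt6 (k n ℓ : ℕ) (hk : 2 ≤ k) (hn : 0 < n) (hl : 0 < ℓ)
    (hkn : k ∣ n) (hkl : k ∣ ℓ) (hln : ℓ ≤ n) (hnk : k ≤ n) :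
    ∃ D : Finset (Finset (Finset (Fin n))),
      (∀ d ∈ D, IsKDivision n k d) ∧ D.card < n ^ (k - 1) ∧
      ∀ Y : Finset (Fin n), Y.card = ℓ → ∃ d ∈ D, IsGoodDivision n ℓ k Y d := by
  obtain ⟨j, rfl⟩ : ∃ j, k = j + 1 := ⟨k - 1, by omega⟩
  have hm : 0 < n / (j + 1) := Nat.div_pos hnk j.succ_pos
  have hcard : #(univ : Finset (Fin n)) = (j + 1) * (n / (j + 1)) := by
    rw [card_fin, Nat.mul_div_cancel' hkn]
  obtain ⟨D, hD, hDcard⟩ := exists_isSplittingSystem_card_le (ℓ / (j + 1)) hm j hcard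
  refine ⟨D.image Finpartition.parts, ?_, ?_, fun Y hY ↦ ?_⟩
  · simp only [forall_mem_image]
    exact fun P hP ↦ isKDivision_parts hn hkn P (hD.card_eq P hP)
  · calc #(D.image Finpartition.parts) ≤ j.factorial * (n / (j + 1)) ^ j :=
          card_image_le.trans hDcard
      _ < ((j + 1) * (n / (j + 1))) ^ j := factorial_mul_pow_lt_succ_mul_pow (by omega) hm
      _ = n ^ (j + 1 - 1) := by rw [Nat.mul_div_cancel' hkn, Nat.add_sub_cancel]
  · have hYcard : #(univ ∩ Y) = (j + 1) * (ℓ / (j + 1)) := by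
      rw [univ_inter, hY, Nat.mul_div_cancel' hkl]
    obtain ⟨P, hP, hPY⟩ := hD.exists_card_inter_eq Y hYcard
    exact ⟨P.parts, mem_image_of_mem _ hP, hPY⟩
end

section
/- Let m be a positive integer, and let c, D be nonnegative integers with D ≤ c and m ≥ 8c + 8. For x ∈ ZMod m write rep(x) for its minimal-absolute-value representative, the unique integer congruent to x mod m lying in (−m/2, m/2]. Let s₁, s₂, s₃, s₄ ∈ ZMod m satisfy |rep(s₁ + s₂ + s₃ + s₄)| ≤ D. Then the number of pairs (r₁, r₂) ∈ (ZMod m)² such that |rep(s₁ + r₁) + rep(s₂ + r₂)| ≤ c and |rep(s₃ − r₁) + rep(s₄ − r₂)| ≤ c (where + inside rep is addition in ZMod m and the outer sums are integer sums of representatives) is at least (m − 4c − 4)·(2c + 1 − D) and at most m·(2c + 1). -/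
/-!
Fix the value `k` of the first integer 2-sum and an integer `e` representing `s₁ + s₂ + s₃ + s₄`.
Then `r₁` determines `r₂ = k - s₁ - s₂ - r₁`, so at most `m` pairs attain `k`; this gives the upper
bound. Modulo `m` the second 2-sum is then `e - k`, and for the lower bound it suffices that both
2-sums hold as integer equations. For `a + b = k` in `ZMod m`, the integer equation
`rep a + rep b = k` fails only if `k - rep a` leaves the window `(-m/2, m/2]`, that is, for at most
`|k| + 1` residues `a`. So every `k` with `|k| ≤ c` and `|e - k| ≤ c` is attained by at least
`m - 2c - 2` admissible pairs, and there are at least `2c + 1 - |e|` such `k`.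
-/

open Finset

section Wraparound

variable {m : ℕ} [NeZero m]

lemma valMinAbs_add_valMinAbs_intCast_sub_eq_iff (a : ZMod m) (k : ℤ) :
    a.valMinAbs + ((k : ZMod m) - a).valMinAbs = k ↔
      (k - a.valMinAbs) * 2 ∈ Set.Ioc (-(m : ℤ)) m := by
  have hcast : (k : ZMod m) - a = ((k - a.valMinAbs : ℤ) : ZMod m) := by
    rw [Int.cast_sub, ZMod.coe_valMinAbs]
  rw [← eq_sub_iff_add_eq', ZMod.valMinAbs_spec, and_iff_right hcast]

lemma card_valMinAbs_add_valMinAbs_ne_le {α : Type*} [Fintype α] {f : α → ZMod m}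
    (hf : f.Injective) (k : ℤ) :
    (#{x | (f x).valMinAbs + ((k : ZMod m) - f x).valMinAbs ≠ k} : ℤ) ≤ |k| + 1 := by
  obtain ⟨I, hI, hcard⟩ : ∃ I : Finset ℤ,
      (∀ v : ℤ, v * 2 ∈ Set.Ioc (-(m : ℤ)) m → (k - v) * 2 ∉ Set.Ioc (-(m : ℤ)) m → v ∈ I) ∧
        (#I : ℤ) ≤ |k| + 1 := by
    rcases le_or_gt k 0 with hk | hk
    · refine ⟨Icc (m / 2 + k) (m / 2), fun v => ?_, ?_⟩
      · simp only [Set.mem_Ioc, mem_Icc]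
        omega
      · rw [Int.card_Icc, abs_of_nonpos hk]
        omega
    · refine ⟨Icc (-(m / 2)) (k - m / 2 - 1), fun v => ?_, ?_⟩
      · simp only [Set.mem_Ioc, mem_Icc]
        omega
      · rw [Int.card_Icc, abs_of_pos hk]
        omega
  refine le_trans (Nat.cast_le.mpr ?_) hcard
  refine card_le_card_of_injOn (fun x => (f x).valMinAbs) (fun x hx => ?_)
    (ZMod.injective_valMinAbs.comp hf).injOn
  have hne := (mem_filter.mp hx).2
  rw [Ne, valMinAbs_add_valMinAbs_intCast_sub_eq_iff] at hne
  exact hI _ (f x).valMinAbs_mem_Ioc hne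

end Wraparound

lemma card_univ_le_card_and_add_card_not_add_card_not {α : Type*} [Fintype α] (p q : α → Prop)
    [DecidablePred p] [DecidablePred q] :
    Fintype.card α ≤ #{x | p x ∧ q x} + #{x | ¬p x} + #{x | ¬q x} := by
  classical
  calc Fintype.card α
      = #{x | p x ∧ q x} + #{x | ¬(p x ∧ q x)} := (card_filter_add_card_filter_not _).symm
    _ = #{x | p x ∧ q x} + #(univ.filter (¬p ·) ∪ univ.filter (¬q ·)) := by
        simp only [not_and_or, filter_or]
    _ ≤ #{x | p x ∧ q x} + (#{x | ¬p x} + #{x | ¬q x}) := by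
        gcongr
        exact card_union_le _ _
    _ = _ := (add_assoc _ _ _).symm

lemma two_mul_add_one_sub_abs_le_card_Icc_max_min (c : ℕ) (e : ℤ) :
    2 * c + 1 - |e| ≤ #(Icc (max (-c : ℤ) (e - c)) (min c (e + c))) := by
  rw [Int.card_Icc]
  grind

section TwoSums

variable {m : ℕ} [NeZero m]

lemma card_two_sum_eq_le (s₁ s₂ : ZMod m) (k : ℤ) :
    #{p : ZMod m × ZMod m | (s₁ + p.1).valMinAbs + (s₂ + p.2).valMinAbs = k} ≤ m := by
  calc _ ≤ #(univ : Finset (ZMod m)) := by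
        refine card_le_card_of_injOn Prod.fst (fun _ _ => mem_coe.mpr (mem_univ _)) ?_
        rintro ⟨r, t⟩ hp ⟨_, t'⟩ hq rfl
        have hsum_eq := (mem_filter.mp hp).2.trans (mem_filter.mp hq).2.symm
        exact Prod.ext rfl (add_left_cancel (ZMod.injective_valMinAbs (add_left_cancel hsum_eq)))
    _ = m := by rw [card_univ, ZMod.card]

lemma card_abs_two_sum_le_le (s₁ s₂ : ZMod m) (c : ℕ) :
    #{p : ZMod m × ZMod m | |(s₁ + p.1).valMinAbs + (s₂ + p.2).valMinAbs| ≤ (c : ℤ)} ≤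
      m * (2 * c + 1) := by
  have hcard : #(Icc (-c : ℤ) c) = 2 * c + 1 := by
    rw [Int.card_Icc]
    omega
  rw [← hcard]
  refine card_le_mul_card_image_of_maps_to
    (f := fun p : ZMod m × ZMod m => (s₁ + p.1).valMinAbs + (s₂ + p.2).valMinAbs)
    (fun p hp => mem_Icc.mpr (abs_le.mp (mem_filter.mp hp).2)) m fun k _ => ?_
  exact (card_le_card (filter_subset_filter _ (filter_subset _ _))).trans
    (card_two_sum_eq_le s₁ s₂ k)

variable {s₁ s₂ s₃ s₄ : ZMod m} {e : ℤ}

lemma le_card_two_sums_eq (he : (e : ZMod m) = s₁ + s₂ + s₃ + s₄) (k : ℤ) :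
    (m : ℤ) - |k| - |e - k| - 2 ≤
      #{p : ZMod m × ZMod m | (s₁ + p.1).valMinAbs + (s₂ + p.2).valMinAbs = k ∧
        (s₃ - p.1).valMinAbs + (s₄ - p.2).valMinAbs = e - k} := by
  have hunion := card_univ_le_card_and_add_card_not_add_card_not
    (fun r => (s₁ + r).valMinAbs + ((k : ZMod m) - (s₁ + r)).valMinAbs = k)
    (fun r => (s₃ - r).valMinAbs + (((e - k : ℤ) : ZMod m) - (s₃ - r)).valMinAbs = e - k)
  have hfirst := card_valMinAbs_add_valMinAbs_ne_le (add_right_injective s₁) k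
  have hsecond := card_valMinAbs_add_valMinAbs_ne_le (sub_right_injective (b := s₃)) (e - k)
  have hlift : #{r | (s₁ + r).valMinAbs + ((k : ZMod m) - (s₁ + r)).valMinAbs = k ∧
        (s₃ - r).valMinAbs + (((e - k : ℤ) : ZMod m) - (s₃ - r)).valMinAbs = e - k} ≤
      #{p : ZMod m × ZMod m | (s₁ + p.1).valMinAbs + (s₂ + p.2).valMinAbs = k ∧
        (s₃ - p.1).valMinAbs + (s₄ - p.2).valMinAbs = e - k} := by
    refine card_le_card_of_injOn (fun r => (r, k - (s₁ + r) - s₂)) (fun r hr => ?_)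
      fun r _ r' _ h => congrArg Prod.fst h
    have hfourth : s₄ - (k - (s₁ + r) - s₂) = ((e - k : ℤ) : ZMod m) - (s₃ - r) := by
      rw [Int.cast_sub, he]
      ring
    simpa only [coe_filter, Set.mem_ofPred_eq, mem_univ, true_and, add_sub_cancel, hfourth] using hr
  rw [ZMod.card] at hunion
  simp only [ne_eq] at hfirst hsecond
  omega

lemma mul_card_le_card_abs_two_sums_le (he : (e : ZMod m) = s₁ + s₂ + s₃ + s₄) (c : ℕ) :
    ((m : ℤ) - 2 * c - 2) * #(Icc (max (-c : ℤ) (e - c)) (min c (e + c))) ≤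
      #{p : ZMod m × ZMod m | |(s₁ + p.1).valMinAbs + (s₂ + p.2).valMinAbs| ≤ (c : ℤ) ∧
        |(s₃ - p.1).valMinAbs + (s₄ - p.2).valMinAbs| ≤ (c : ℤ)} := by
  set K : Finset ℤ := Icc (max (-c : ℤ) (e - c)) (min c (e + c))
  let S : ZMod m × ZMod m → ℤ := fun p => (s₁ + p.1).valMinAbs + (s₂ + p.2).valMinAbs
  let T : ZMod m × ZMod m → ℤ := fun p => (s₃ - p.1).valMinAbs + (s₄ - p.2).valMinAbs
  have hK {k : ℤ} (hk : k ∈ K) : |k| ≤ c ∧ |e - k| ≤ c := by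
    simp only [K, mem_Icc, max_le_iff, le_min_iff] at hk
    simp only [abs_le]
    omega
  have hfiber (k : ℤ) (hk : k ∈ K) : (m : ℤ) - 2 * c - 2 ≤ #{p | T p = e - S p ∧ S p = k} := by
    calc (m : ℤ) - 2 * c - 2 ≤ m - |k| - |e - k| - 2 := by linarith [(hK hk).1, (hK hk).2]
      _ ≤ #{p | S p = k ∧ T p = e - k} := le_card_two_sums_eq he k
      _ = #{p | T p = e - S p ∧ S p = k} := by
        congr 2 with p
        grind
  calc ((m : ℤ) - 2 * c - 2) * #K = ∑ _k ∈ K, ((m : ℤ) - 2 * c - 2) := by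
        rw [sum_const, nsmul_eq_mul, mul_comm]
    _ ≤ ∑ k ∈ K, (#{p | T p = e - S p ∧ S p = k} : ℤ) := sum_le_sum hfiber
    _ = #{p | T p = e - S p ∧ S p ∈ K} := by
        simp only [← filter_filter, ← Nat.cast_sum, sum_card_fiberwise_eq_card_filter]
    _ ≤ #{p | |S p| ≤ c ∧ |T p| ≤ c} := by
        refine Nat.cast_le.mpr (card_le_card (monotone_filter_right _ fun p _ hp => ?_))
        exact ⟨(hK hp.2).1, hp.1 ▸ (hK hp.2).2⟩

end TwoSums

theorem stmt10_general (m : ℕ) [NeZero m] (c D : ℕ) (hDc : D ≤ 2 * c + 1)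
    (s₁ s₂ s₃ s₄ : ZMod m)
    (hsum : |(s₁ + s₂ + s₃ + s₄).valMinAbs| ≤ (D : ℤ)) :
    ((m : ℤ) - 2 * c - 2) * (2 * c + 1 - D) ≤
      ((Finset.univ.filter
          (fun p : ZMod m × ZMod m =>
            |(s₁ + p.1).valMinAbs + (s₂ + p.2).valMinAbs| ≤ (c : ℤ) ∧
            |(s₃ - p.1).valMinAbs + (s₄ - p.2).valMinAbs| ≤ (c : ℤ))).card : ℤ) ∧
    ((Finset.univ.filter
        (fun p : ZMod m × ZMod m =>
          |(s₁ + p.1).valMinAbs + (s₂ + p.2).valMinAbs| ≤ (c : ℤ) ∧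
          |(s₃ - p.1).valMinAbs + (s₄ - p.2).valMinAbs| ≤ (c : ℤ))).card : ℤ)
      ≤ (m : ℤ) * (2 * c + 1) := by
  set e := (s₁ + s₂ + s₃ + s₄).valMinAbs
  constructor
  · rcases le_total 0 ((m : ℤ) - 2 * c - 2) with hm | hm
    · have hvalues := two_mul_add_one_sub_abs_le_card_Icc_max_min c e
      exact (mul_le_mul_of_nonneg_left (by linarith) hm).trans
        (mul_card_le_card_abs_two_sums_le (ZMod.coe_valMinAbs _) c)
    · exact (mul_nonpos_of_nonpos_of_nonneg hm (by omega)).trans (Nat.cast_nonneg _)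
  · refine le_trans (Nat.cast_le.mpr ?_) (mod_cast card_abs_two_sum_le_le s₁ s₂ c)
    exact card_le_card (monotone_filter_right _ fun p _ hp => hp.1)

theorem stmt10 (m : ℕ) [NeZero m] (c D : ℕ) (hDc : D ≤ c) (hm : 8 * c + 8 ≤ m)
    (s₁ s₂ s₃ s₄ : ZMod m)
    (hsum : |(s₁ + s₂ + s₃ + s₄).valMinAbs| ≤ (D : ℤ)) :
    ((m : ℤ) - 4 * c - 4) * (2 * c + 1 - D) ≤
      ((Finset.univ.filter
          (fun p : ZMod m × ZMod m =>
            |(s₁ + p.1).valMinAbs + (s₂ + p.2).valMinAbs| ≤ (c : ℤ) ∧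
            |(s₃ - p.1).valMinAbs + (s₄ - p.2).valMinAbs| ≤ (c : ℤ))).card : ℤ) ∧
    ((Finset.univ.filter
        (fun p : ZMod m × ZMod m =>
          |(s₁ + p.1).valMinAbs + (s₂ + p.2).valMinAbs| ≤ (c : ℤ) ∧
          |(s₃ - p.1).valMinAbs + (s₄ - p.2).valMinAbs| ≤ (c : ℤ))).card : ℤ)
      ≤ (m : ℤ) * (2 * c + 1) := by
  have hgeneral := stmt10_general m c D (by omega) s₁ s₂ s₃ s₄ hsum
  exact ⟨(mul_le_mul_of_nonneg_right (by omega) (by omega)).trans hgeneral.1, hgeneral.2⟩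
end
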